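/- In the monoid Q associated to the game 4.7, for every heap size k and every m ∈ ℕ with w(H_k) ≤ m, one has b^m · Φ(H_k) = a^{g(H_k)} · b^{m + t(H_k)}, where g(H_k) = 2 if k is even and g(H_k) = 1 if k is odd. -/

import Mathlib

/-- Generators of the misère quotient of 4.7: `a`, `b`, `c`, and `d n`. -/
inductive Gen47 where
  | a : Gen47
  | b : Gen47
  | c : Gen47
  | d : ℕ → Gen47

/-- The free commutative monoid on the generators, written multiplicatively. -/
abbrev FM47 := Multiplicative (Multiset Gen47)

/-- The generator `x` as an element of the free commutative monoid. -/
def fgen47 (x : Gen47) : FM47 := Multiplicative.ofAdd {x}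

def fa : FM47 := fgen47 .a
def fb : FM47 := fgen47 .b
def fc : FM47 := fgen47 .c
def fd (n : ℕ) : FM47 := fgen47 (.d n)

/-- The defining relations of the quotient `Q` for 4.7:
`a² = 1`, `bc = ab³`, `c² = b⁴`, `b^(n+1) d_n = a^(n+1) b^(2n+5)`,
`c d_n = a b² d_n`, and `d_m d_n = a^(m+1) b^(m+4) d_n` for `m ≤ n`. -/
def rel47 : FM47 → FM47 → Prop := fun x y =>
  (x = fa ^ 2 ∧ y = 1) ∨
  (x = fb * fc ∧ y = fa * fb ^ 3) ∨
  (x = fc ^ 2 ∧ y = fb ^ 4) ∨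
  (∃ n : ℕ, x = fb ^ (n + 1) * fd n ∧ y = fa ^ (n + 1) * fb ^ (2 * n + 5)) ∨
  (∃ n : ℕ, x = fc * fd n ∧ y = fa * fb ^ 2 * fd n) ∨
  (∃ m n : ℕ, m ≤ n ∧ x = fd m * fd n ∧ y = fa ^ (m + 1) * fb ^ (m + 4) * fd n)

/-- The commutative monoid `Q` presented by generators `a`, `b`, `c`, `d_n`
and the relations `rel47`. -/
def Q47 : Type := (conGen rel47).Quotient

instance : CommMonoid Q47 := Con.commMonoid _

/-- The image of `a` in `Q`. -/
def qa : Q47 := (conGen rel47).mk' fa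
/-- The image of `b` in `Q`. -/
def qb : Q47 := (conGen rel47).mk' fb
/-- The image of `c` in `Q`. -/
def qc : Q47 := (conGen rel47).mk' fc
/-- The image of `d_n` in `Q`. -/
def qd (n : ℕ) : Q47 := (conGen rel47).mk' (fd n)

/-- The P-portion `P = {a} ∪ {b^(2m) : m ≥ 1} ∪ {b^m d_n : m odd, n even, m < n}
∪ {a b^m d_n : m even, n odd, m < n}`. -/
def P47 : Set Q47 :=
  {x | x = qa} ∪
  {x | ∃ m : ℕ, 1 ≤ m ∧ x = qb ^ (2 * m)} ∪
  {x | ∃ m n : ℕ, m % 2 = 1 ∧ n % 2 = 0 ∧ m < n ∧ x = qb ^ m * qd n} ∪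
  {x | ∃ m n : ℕ, m % 2 = 0 ∧ n % 2 = 1 ∧ m < n ∧ x = qa * qb ^ m * qd n}

/-- The pretending function on single heaps for 4.7. -/
def phi47 (k : ℕ) : Q47 :=
  if k = 1 ∨ k = 3 then qa
  else if k = 2 ∨ k = 4 then qb
  else if k = 5 then qc
  else if k = 6 then qb ^ 3
  else qd (k - 7)

/-- The pretending function extended multiplicatively to positions. -/
def Phi47 (G : Multiset ℕ) : Q47 := (G.map phi47).prod

/-- The function `t` on single heaps for 4.7. -/
def t47 (k : ℕ) : ℕ :=
  if k = 1 then 0 else if k = 2 then 1 else k - 3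

/-- The function `w` on single heaps for 4.7. -/
def w47 (k : ℕ) : ℕ :=
  if k ≤ 4 then 0 else if k = 5 then 1 else k - 6

/-! If `b^n x = y b^(n+t)`, then `b^m x = y b^(m+t)` for all `m ≥ n`, so only the threshold exponent
`m = w(H_k)` matters. Since `a² = 1`, the factor `a^(g(H_k))` is just `a^k`. At the threshold the
identity is `bc = ab³` for `k = 5` and `b^(n+1) d_n = a^(n+1) b^(2n+5)` for `k = n + 7`; for the
remaining heaps it needs only `a² = 1`. -/

lemma pow_mul_eq_mul_pow_add_of_le {M : Type*} [CommMonoid M] {b x y : M} {n m t : ℕ}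
    (hnm : n ≤ m) (h : b ^ n * x = y * b ^ (n + t)) : b ^ m * x = y * b ^ (m + t) := by
  obtain ⟨j, rfl⟩ := Nat.exists_eq_add_of_le' hnm
  calc b ^ (j + n) * x = b ^ j * (b ^ n * x) := by rw [pow_add, mul_assoc]
    _ = b ^ j * (y * b ^ (n + t)) := by rw [h]
    _ = y * b ^ (j + n + t) := by rw [mul_left_comm, ← pow_add, add_assoc]

lemma qa_sq : qa ^ 2 = 1 :=
  (Con.eq _).2 (ConGen.Rel.of _ _ (Or.inl ⟨rfl, rfl⟩))

lemma qb_mul_qc : qb * qc = qa * qb ^ 3 :=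
  (Con.eq _).2 (ConGen.Rel.of _ _ (Or.inr (Or.inl ⟨rfl, rfl⟩)))

lemma qb_pow_succ_mul_qd (n : ℕ) : qb ^ (n + 1) * qd n = qa ^ (n + 1) * qb ^ (2 * n + 5) :=
  (Con.eq _).2 (ConGen.Rel.of _ _ (Or.inr (Or.inr (Or.inr (Or.inl ⟨n, rfl, rfl⟩)))))

lemma phi47_add_seven (n : ℕ) : phi47 (n + 7) = qd n := by
  simp [phi47]

lemma t47_add_seven (n : ℕ) : t47 (n + 7) = n + 4 := by
  simp [t47]

lemma w47_add_seven (n : ℕ) : w47 (n + 7) = n + 1 := by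
  simp [w47]

lemma qb_pow_w47_mul_phi47 {k : ℕ} (hk : 1 ≤ k) :
    qb ^ w47 k * phi47 k = qa ^ k * qb ^ (w47 k + t47 k) := by
  match k with
  | 1 => simp [phi47, t47, w47]
  | 2 => simp [phi47, t47, w47, qa_sq]
  | 3 => simp [phi47, t47, w47, pow_eq_pow_mod 3 qa_sq]
  | 4 => simp [phi47, t47, w47, pow_eq_pow_mod 4 qa_sq]
  | 5 => simpa [phi47, t47, w47, pow_eq_pow_mod 5 qa_sq] using qb_mul_qc
  | 6 => simp [phi47, t47, w47, pow_eq_pow_mod 6 qa_sq]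
  | n + 7 =>
    have exponent_eq : 2 * n + 5 = n + 1 + (n + 4) := by ring
    have parity_eq : n + 1 ≡ n + 7 [MOD 2] := by
      unfold Nat.ModEq
      omega
    rw [phi47_add_seven, t47_add_seven, w47_add_seven, qb_pow_succ_mul_qd, exponent_eq,
      pow_eq_pow_of_modEq parity_eq qa_sq]

/-- For every heap size `k ≥ 1` and every `m ∈ ℕ` with `w(H_k) ≤ m`, one has
`b^m Φ(H_k) = a^(g(H_k)) b^(m + t(H_k))`, where `g(H_k)` is 2 if `k` is even
and 1 if `k` is odd. -/
theorem phi47_absorb :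
    ∀ k : ℕ, 1 ≤ k → ∀ m : ℕ, w47 k ≤ m →
      qb ^ m * phi47 k =
        qa ^ (if k % 2 = 0 then 2 else 1) * qb ^ (m + t47 k) := by
  intro k hk m hm
  have parity_eq : (if k % 2 = 0 then 2 else 1) ≡ k [MOD 2] := by
    unfold Nat.ModEq
    split_ifs <;> omega
  rw [pow_eq_pow_of_modEq parity_eq qa_sq]
  exact pow_mul_eq_mul_pow_add_of_le hm (qb_pow_w47_mul_phi47 hk)
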